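/- Let p be an odd prime, n ≥ 1, and R a commutative ring in which p·1 = 0. Let G(R) be the set of residue classes in R[X]/(X^{p^n}) of polynomials of the form X + Σ_{k=1}^{n−1} a_k X^{p^k} with a_k ∈ R. Then: (i) for all f, g ∈ G(R), the class of g(f(X)) again lies in G(R); (ii) for every f ∈ G(R) there exists a unique g ∈ G(R) with g(f(X)) ≡ X (mod X^{p^n}), and this g also satisfies f(g(X)) ≡ X (mod X^{p^n}). Consequently G(R) is a group under the product f·g := class of g(f(X)), with identity the class of X. -/

import Mathlib

open Polynomial

/-!
Write `A = R[X]/(X^(p^n))` and let `x` be the class of `X`. Substituting `f` is the `R`-algebra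
endomorphism `φ_f` of `A` with `φ_f x = f`, and `φ_f (φ_g x)` is the class of `g(f(X))`; so
`f · g = g(f(X))` is the product of `φ_f` and `φ_g` in the monoid `A →ₐ[R] A`. Let `T m` be the
`R`-span of the `x^(p^k)` with `k ≥ m`, so that `G(R) = x + T 1` and `T n = 0`. Since
`(a + b)^(p^k) = a^(p^k) + b^(p^k)`, the linear map `1 - φ_f` sends `T m` into `T (m + 1)`.
Hence the finite geometric series `∑ (1 - φ_f)^i x` lies in `x + T 1` and is mapped to `x`
by `φ_f`: it is the inverse of `f`.
-/

theorem add_pow_prime_pow_of_natCast_eq_zero {A : Type*} [CommSemiring A] {p : ℕ}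
    (hp : p.Prime) (hpA : (p : A) = 0) (a b : A) (k : ℕ) :
    (a + b) ^ p ^ k = a ^ p ^ k + b ^ p ^ k := by
  simp [add_pow_prime_pow_eq hp, hpA]

section FrobeniusSpan

variable {R A : Type*} [CommRing R] [CommRing A] [Algebra R A] {p : ℕ} {x : A}

/-- The values at `x` of the `p`-polynomials `∑ a_k X^(p^k)` all of whose terms have `k ≥ m`. -/
def frobeniusSpan (R : Type*) {A : Type*} [CommRing R] [CommRing A] [Algebra R A]
    (p : ℕ) (x : A) (m : ℕ) : Submodule R A :=
  Submodule.span R ((fun k => x ^ p ^ k) '' Set.Ici m)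

theorem pow_mem_frobeniusSpan {m k : ℕ} (h : m ≤ k) : x ^ p ^ k ∈ frobeniusSpan R p x m :=
  Submodule.subset_span ⟨k, h, rfl⟩

theorem self_mem_frobeniusSpan : x ∈ frobeniusSpan R p x 0 := by
  simpa using pow_mem_frobeniusSpan (R := R) (p := p) (x := x) (le_refl 0)

theorem frobeniusSpan_antitone : Antitone (frobeniusSpan R p x) := fun _ _ h =>
  Submodule.span_mono (Set.image_mono (Set.Ici_subset_Ici.2 h))

theorem pow_prime_pow_mem_frobeniusSpan (hp : p.Prime) (hpA : (p : A) = 0) {m : ℕ} {t : A}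
    (ht : t ∈ frobeniusSpan R p x m) (j : ℕ) : t ^ p ^ j ∈ frobeniusSpan R p x (m + j) := by
  induction ht using Submodule.span_induction with
  | mem t ht =>
    obtain ⟨k, hk, rfl⟩ := ht
    simpa only [← pow_mul, ← pow_add] using
      pow_mem_frobeniusSpan (Nat.add_le_add_right hk j)
  | zero => simp [zero_pow (pow_ne_zero j hp.ne_zero)]
  | add s t _ _ hs ht =>
    rw [add_pow_prime_pow_of_natCast_eq_zero hp hpA]
    exact add_mem hs ht
  | smul c t _ ht =>
    rw [_root_.smul_pow]
    exact Submodule.smul_mem _ _ ht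

theorem pow_prime_pow_eq_zero_of_le (hp : p.Prime) {n k : ℕ} (hx : x ^ p ^ n = 0) (h : n ≤ k) :
    x ^ p ^ k = 0 :=
  pow_eq_zero_of_le (Nat.pow_le_pow_right hp.pos h) hx

theorem frobeniusSpan_eq_bot (hp : p.Prime) {n m : ℕ} (hx : x ^ p ^ n = 0) (h : n ≤ m) :
    frobeniusSpan R p x m = ⊥ := by
  rw [frobeniusSpan, Submodule.span_eq_bot]
  rintro _ ⟨k, hk, rfl⟩
  exact pow_prime_pow_eq_zero_of_le hp hx (h.trans hk)

theorem pow_eq_zero_of_mem_frobeniusSpan (hp : p.Prime) (hpA : (p : A) = 0) {n : ℕ}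
    (hx : x ^ p ^ n = 0) {y : A} (hy : y ∈ frobeniusSpan R p x 0) : y ^ p ^ n = 0 := by
  rw [← Submodule.mem_bot R, ← frobeniusSpan_eq_bot hp hx (zero_add n).ge]
  exact pow_prime_pow_mem_frobeniusSpan hp hpA hy n

theorem mem_frobeniusSpan_iff_exists_sum (hp : p.Prime) {m n : ℕ} (hx : x ^ p ^ n = 0) {t : A} :
    t ∈ frobeniusSpan R p x m ↔ ∃ a : ℕ → R, t = ∑ k ∈ Finset.Ico m n, a k • x ^ p ^ k := by
  have truncate : frobeniusSpan R p x m =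
      Submodule.span R ((fun k => x ^ p ^ k) '' (Finset.Ico m n : Set ℕ)) := by
    refine le_antisymm (Submodule.span_le.2 ?_) (Submodule.span_mono (Set.image_mono ?_))
    · rintro _ ⟨k, hk, rfl⟩
      rcases lt_or_ge k n with hkn | hkn
      · exact Submodule.subset_span ⟨k, by simpa using ⟨hk, hkn⟩, rfl⟩
      · simp [pow_prime_pow_eq_zero_of_le hp hx hkn]
    · intro k hk
      exact (Finset.mem_Ico.1 hk).1
  rw [truncate, Submodule.mem_span_image_finset_iff_exists_fun']
  simp only [eq_comm]

/-- The `R`-algebra endomorphisms sending `x` to `x + ∑ a_k x^(p^k)` with all `k ≥ 1`,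
as substitution of a `p`-polynomial with linear term `X` does; on the span of the `x^(p^k)` such an
endomorphism is the identity plus a map raising the exponent `k`. -/
def IsUnipotentAt (p : ℕ) (x : A) (φ : A →ₐ[R] A) : Prop :=
  φ x - x ∈ frobeniusSpan R p x 1

theorem IsUnipotentAt.apply_sub_mem (hp : p.Prime) (hpA : (p : A) = 0) {φ : A →ₐ[R] A}
    (hφ : IsUnipotentAt p x φ) {m : ℕ} {t : A} (ht : t ∈ frobeniusSpan R p x m) :
    φ t - t ∈ frobeniusSpan R p x (m + 1) := by
  induction ht using Submodule.span_induction with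
  | mem t ht =>
    obtain ⟨k, hk, rfl⟩ := ht
    have frobenius : φ (x ^ p ^ k) - x ^ p ^ k = (φ x - x) ^ p ^ k := by
      rw [map_pow, sub_eq_iff_eq_add, ← add_pow_prime_pow_of_natCast_eq_zero hp hpA,
        sub_add_cancel]
    rw [frobenius]
    exact frobeniusSpan_antitone (by simpa [add_comm 1] using hk)
      (pow_prime_pow_mem_frobeniusSpan hp hpA hφ k)
  | zero => simp
  | add s t _ _ hs ht =>
    rw [map_add, add_sub_add_comm]
    exact add_mem hs ht
  | smul c t _ ht =>
    rw [map_smul, ← smul_sub]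
    exact Submodule.smul_mem _ _ ht

theorem IsUnipotentAt.one : IsUnipotentAt p x (1 : A →ₐ[R] A) := by
  simp [IsUnipotentAt]

theorem IsUnipotentAt.mul (hp : p.Prime) (hpA : (p : A) = 0) {φ ψ : A →ₐ[R] A}
    (hφ : IsUnipotentAt p x φ) (hψ : IsUnipotentAt p x ψ) : IsUnipotentAt p x (φ * ψ) := by
  have decomposition : (φ * ψ) x - x =
      (φ (ψ x - x) - (ψ x - x)) + (ψ x - x) + (φ x - x) := by
    rw [AlgHom.mul_apply, map_sub]
    ring
  rw [IsUnipotentAt, decomposition]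
  exact add_mem (add_mem
    (frobeniusSpan_antitone one_le_two (hφ.apply_sub_mem hp hpA hψ)) hψ) hφ

theorem IsUnipotentAt.one_sub_pow_apply_mem (hp : p.Prime) (hpA : (p : A) = 0)
    {φ : A →ₐ[R] A} (hφ : IsUnipotentAt p x φ) (i : ℕ) :
    ((1 - φ.toLinearMap) ^ i : Module.End R A) x ∈ frobeniusSpan R p x i := by
  induction i with
  | zero => exact self_mem_frobeniusSpan
  | succ i ih =>
    rw [pow_succ', Module.End.mul_apply, ← neg_mem_iff]
    simpa using hφ.apply_sub_mem hp hpA ih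

theorem IsUnipotentAt.exists_apply_eq (hp : p.Prime) (hpA : (p : A) = 0) {n : ℕ}
    (hx : x ^ p ^ n = 0) {φ : A →ₐ[R] A} (hφ : IsUnipotentAt p x φ) :
    ∃ y, y - x ∈ frobeniusSpan R p x 1 ∧ φ y = x := by
  let δ : Module.End R A := 1 - φ.toLinearMap
  have hδ (i : ℕ) : (δ ^ i) x ∈ frobeniusSpan R p x i := hφ.one_sub_pow_apply_mem hp hpA i
  have hδ_nilpotent : (δ ^ (n + 1)) x = 0 := by
    simpa [frobeniusSpan_eq_bot hp hx n.le_succ] using hδ (n + 1)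
  refine ⟨(∑ i ∈ Finset.range (n + 1), δ ^ i) x, ?_, ?_⟩
  · rw [Finset.sum_range_succ', pow_zero, LinearMap.add_apply, Module.End.one_apply,
      add_sub_cancel_right, LinearMap.sum_apply]
    exact sum_mem fun i _ => frobeniusSpan_antitone (Nat.le_add_left 1 i) (hδ (i + 1))
  · calc φ ((∑ i ∈ Finset.range (n + 1), δ ^ i) x)
        = ((1 - δ) * ∑ i ∈ Finset.range (n + 1), δ ^ i) x := by
          rw [Module.End.mul_apply, sub_sub_cancel, AlgHom.toLinearMap_apply]
      _ = x := by
          rw [mul_neg_geom_sum, LinearMap.sub_apply, Module.End.one_apply, hδ_nilpotent, sub_zero]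

end FrobeniusSpan

section Substitution

variable {R : Type*} [CommRing R]

theorem algHom_apply_mk_eq_mk_comp {I : Ideal R[X]} (φ : R[X] ⧸ I →ₐ[R] R[X] ⧸ I) {f : R[X]}
    (hφ : φ (Ideal.Quotient.mk I X) = Ideal.Quotient.mk I f) (g : R[X]) :
    φ (Ideal.Quotient.mk I g) = Ideal.Quotient.mk I (g.comp f) := by
  have : φ.comp (Ideal.Quotient.mkₐ R I) = (Ideal.Quotient.mkₐ R I).comp (aeval f) :=
    Polynomial.algHom_ext (by simpa using hφ)
  simpa [comp_eq_aeval] using DFunLike.congr_fun this g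

theorem algHom_ext_mk_X {I : Ideal R[X]} {φ ψ : R[X] ⧸ I →ₐ[R] R[X] ⧸ I}
    (h : φ (Ideal.Quotient.mk I X) = ψ (Ideal.Quotient.mk I X)) : φ = ψ :=
  Ideal.Quotient.algHom_ext R (Polynomial.algHom_ext h)

theorem exists_algHom_apply_mk_X_eq {B : Type*} [CommRing B] [Algebra R B] {N : ℕ} {y : B}
    (hy : y ^ N = 0) :
    ∃ φ : R[X] ⧸ Ideal.span {(X : R[X]) ^ N} →ₐ[R] B, φ (Ideal.Quotient.mk _ X) = y := by
  refine ⟨Ideal.Quotient.liftₐ _ (aeval y) fun f hf => ?_, aeval_X y⟩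
  obtain ⟨q, rfl⟩ := Ideal.mem_span_singleton.1 hf
  simp [hy]

end Substitution

section SubstitutionGroup

/-- The ring `R[X]/(X^N)` of polynomials truncated at degree `N`. -/
abbrev TruncatedPolynomial (R : Type*) [CommRing R] (N : ℕ) : Type _ :=
  R[X] ⧸ Ideal.span {(X : R[X]) ^ N}

/-- The class of `X` in `R[X]/(X^N)`. -/
noncomputable abbrev truncatedX (R : Type*) [CommRing R] (N : ℕ) : TruncatedPolynomial R N :=
  Ideal.Quotient.mk _ X

/-- The set `G(R)` of classes `x + ∑ a_k x^(p^k)`, `k ≥ 1`, in `R[X]/(X^(p^n))`, described without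
coordinates as the coset of `x` modulo the span of the `x^(p^k)`, `k ≥ 1`. -/
def substitutionCoset (R : Type*) [CommRing R] (p n : ℕ) :
    Set (TruncatedPolynomial R (p ^ n)) :=
  {y | y - truncatedX R (p ^ n) ∈ frobeniusSpan R p (truncatedX R (p ^ n)) 1}

variable {R : Type*} [CommRing R] {p n : ℕ}

theorem truncatedX_pow (R : Type*) [CommRing R] (N : ℕ) : truncatedX R N ^ N = 0 := by
  rw [← map_pow, Ideal.Quotient.eq_zero_iff_mem]
  exact Ideal.mem_span_singleton_self _

theorem image_mk_eq_substitutionCoset (hp : p.Prime) :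
    Ideal.Quotient.mk (Ideal.span {(X : R[X]) ^ p ^ n}) ''
      {f | ∃ a : ℕ → R, f = X + ∑ k ∈ Finset.Ico 1 n, C (a k) * X ^ p ^ k} =
      substitutionCoset R p n := by
  have mk_form (a : ℕ → R) :
      Ideal.Quotient.mk (Ideal.span {(X : R[X]) ^ p ^ n})
        (X + ∑ k ∈ Finset.Ico 1 n, C (a k) * X ^ p ^ k) =
      truncatedX R (p ^ n) + ∑ k ∈ Finset.Ico 1 n, a k • truncatedX R (p ^ n) ^ p ^ k := by
    simp only [map_add, map_sum, ← map_pow, ← smul_eq_C_mul]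
    rfl
  ext y
  rw [substitutionCoset, Set.mem_ofPred_eq,
    mem_frobeniusSpan_iff_exists_sum hp (truncatedX_pow R (p ^ n))]
  simp only [sub_eq_iff_eq_add', Set.mem_image, Set.mem_ofPred_eq]
  constructor
  · rintro ⟨_, ⟨a, rfl⟩, rfl⟩
    exact ⟨a, mk_form a⟩
  · rintro ⟨a, rfl⟩
    exact ⟨_, ⟨a, rfl⟩, mk_form a⟩

theorem exists_isUnipotentAt_apply_truncatedX_eq (hp : p.Prime)
    (hpA : (p : TruncatedPolynomial R (p ^ n)) = 0) {y : TruncatedPolynomial R (p ^ n)}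
    (hy : y ∈ substitutionCoset R p n) :
    ∃ φ : TruncatedPolynomial R (p ^ n) →ₐ[R] TruncatedPolynomial R (p ^ n),
      IsUnipotentAt p (truncatedX R (p ^ n)) φ ∧ φ (truncatedX R (p ^ n)) = y := by
  have y_mem : y ∈ frobeniusSpan R p (truncatedX R (p ^ n)) 0 := by
    simpa using add_mem (frobeniusSpan_antitone zero_le_one hy) self_mem_frobeniusSpan
  obtain ⟨φ, hφ⟩ := exists_algHom_apply_mk_X_eq (R := R)
    (pow_eq_zero_of_mem_frobeniusSpan hp hpA (truncatedX_pow R (p ^ n)) y_mem)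
  exact ⟨φ, by rwa [IsUnipotentAt, hφ], hφ⟩

variable (hp : p.Prime) (hpA : (p : TruncatedPolynomial R (p ^ n)) = 0)

/-- The substitutions by elements of `G(R)`, as a monoid of endomorphisms of `R[X]/(X^(p^n))`. -/
def unipotentSubstitutions :
    Submonoid (TruncatedPolynomial R (p ^ n) →ₐ[R] TruncatedPolynomial R (p ^ n)) where
  carrier := {φ | IsUnipotentAt p (truncatedX R (p ^ n)) φ}
  one_mem' := IsUnipotentAt.one
  mul_mem' hφ hψ := hφ.mul hp hpA hψ

theorem unipotentSubstitutions_exists_mul_eq_one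
    (φ : unipotentSubstitutions hp hpA) : ∃ ψ, φ * ψ = 1 := by
  obtain ⟨y, hy, hφy⟩ := φ.2.exists_apply_eq hp hpA (truncatedX_pow R (p ^ n))
  obtain ⟨ψ, hψ, hψx⟩ := exists_isUnipotentAt_apply_truncatedX_eq hp hpA hy
  refine ⟨⟨ψ, hψ⟩, Subtype.ext (algHom_ext_mk_X ?_)⟩
  exact (congrArg φ.1 hψx).trans hφy

/-- The substitutions by elements of `G(R)` form a group under composition. -/
noncomputable abbrev unipotentSubstitutionsGroup : Group (unipotentSubstitutions hp hpA) :=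
  groupOfIsUnit fun φ => by
    obtain ⟨ψ, hφψ⟩ := unipotentSubstitutions_exists_mul_eq_one hp hpA φ
    obtain ⟨χ, hψχ⟩ := unipotentSubstitutions_exists_mul_eq_one hp hpA ψ
    exact ⟨⟨φ, ψ, hφψ, by rwa [left_inv_eq_right_inv hφψ hψχ]⟩, rfl⟩

/-- Identification of a substitution with the image of `X` under it. -/
noncomputable def unipotentSubstitutionsEquiv :
    unipotentSubstitutions hp hpA ≃ substitutionCoset R p n :=
  Equiv.ofBijective (fun φ => ⟨φ.1 (truncatedX R (p ^ n)), φ.2⟩)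
    ⟨fun _ _ h => Subtype.ext (algHom_ext_mk_X (congrArg Subtype.val h)), fun y =>
      have ⟨φ, hφ, hφy⟩ := exists_isUnipotentAt_apply_truncatedX_eq hp hpA y.2
      ⟨⟨φ, hφ⟩, Subtype.ext hφy⟩⟩

/-- The group structure on `G(R)`, transported from the composition of substitutions. -/
noncomputable abbrev substitutionCosetGroup : Group (substitutionCoset R p n) :=
  letI := unipotentSubstitutionsGroup hp hpA
  (unipotentSubstitutionsEquiv hp hpA).symm.group

theorem substitutionCosetGroup_coe_one :
    letI := substitutionCosetGroup hp hpA
    ((1 : substitutionCoset R p n) : TruncatedPolynomial R (p ^ n)) = truncatedX R (p ^ n) :=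
  rfl

theorem substitutionCosetGroup_coe_mul {a b : substitutionCoset R p n} {f g : R[X]}
    (ha : (a : TruncatedPolynomial R (p ^ n)) = Ideal.Quotient.mk _ f)
    (hb : (b : TruncatedPolynomial R (p ^ n)) = Ideal.Quotient.mk _ g) :
    letI := substitutionCosetGroup hp hpA
    ((a * b : substitutionCoset R p n) : TruncatedPolynomial R (p ^ n)) =
      Ideal.Quotient.mk _ (g.comp f) := by
  obtain ⟨φ, rfl⟩ := (unipotentSubstitutionsEquiv hp hpA).surjective a
  obtain ⟨ψ, rfl⟩ := (unipotentSubstitutionsEquiv hp hpA).surjective b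
  calc _ = ((unipotentSubstitutionsEquiv hp hpA (φ * ψ) : substitutionCoset R p n) :
        TruncatedPolynomial R (p ^ n)) := by
        simp only [Equiv.mul_def, Equiv.symm_symm, Equiv.symm_apply_apply]
    _ = φ.1 (Ideal.Quotient.mk _ g) := congrArg φ.1 hb
    _ = Ideal.Quotient.mk _ (g.comp f) := algHom_apply_mk_eq_mk_comp φ.1 ha g

end SubstitutionGroup

theorem stmt_1_general (p n : ℕ) (hp : p.Prime) (R : Type*) [CommRing R] (hpR : (p : R) = 0)
    (P : Set (Polynomial R))
    (hP : P = {f | ∃ a : ℕ → R,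
      f = X + ∑ k ∈ Finset.Ico 1 n, C (a k) * X ^ (p ^ k)})
    (π : Polynomial R →+* Polynomial R ⧸ Ideal.span {(X : Polynomial R) ^ (p ^ n)})
    (hπ : π = Ideal.Quotient.mk (Ideal.span {(X : Polynomial R) ^ (p ^ n)}))
    (G : Set (Polynomial R ⧸ Ideal.span {(X : Polynomial R) ^ (p ^ n)}))
    (hG : G = π '' P) :
    (∀ f ∈ P, ∀ g ∈ P, π (g.comp f) ∈ G) ∧
    (∀ f ∈ P, ∃ g ∈ P, π (g.comp f) = π X ∧ π (f.comp g) = π X ∧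
      ∀ g' ∈ P, π (g'.comp f) = π X → π g' = π g) ∧
    (∃ (mul : G → G → G) (one : G) (inv : G → G),
      (∀ a b c, mul (mul a b) c = mul a (mul b c)) ∧
      (∀ a, mul one a = a) ∧ (∀ a, mul a one = a) ∧
      (∀ a, mul (inv a) a = one) ∧
      (one : Polynomial R ⧸ Ideal.span {(X : Polynomial R) ^ (p ^ n)}) = π X ∧
      (∀ (f g : Polynomial R), f ∈ P → g ∈ P → ∀ (x y : G),
        (x : Polynomial R ⧸ Ideal.span {(X : Polynomial R) ^ (p ^ n)}) = π f →
        (y : Polynomial R ⧸ Ideal.span {(X : Polynomial R) ^ (p ^ n)}) = π g →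
        ((mul x y : G) : Polynomial R ⧸ Ideal.span {(X : Polynomial R) ^ (p ^ n)}) =
          π (g.comp f))) := by
  have hpA : (p : TruncatedPolynomial R (p ^ n)) = 0 := by
    simpa using congrArg (algebraMap R (TruncatedPolynomial R (p ^ n))) hpR
  have mem_G {f} (hf : f ∈ P) : π f ∈ G := hG ▸ Set.mem_image_of_mem π hf
  have exists_rep (a : G) : ∃ f ∈ P, π f = a := by simpa [hG] using a.2
  obtain rfl : G = substitutionCoset R p n := by
    rw [hG, hπ, hP, image_mk_eq_substitutionCoset hp]
  subst hπ
  let _ := substitutionCosetGroup hp hpA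
  have coe_one := substitutionCosetGroup_coe_one hp hpA
  have coe_mul {a b : substitutionCoset R p n} {f g} (ha : a.1 = Ideal.Quotient.mk _ f)
      (hb : b.1 = Ideal.Quotient.mk _ g) := substitutionCosetGroup_coe_mul hp hpA ha hb
  refine ⟨fun f hf g hg => ?_, fun f hf => ?_, (· * ·), 1, (·⁻¹), mul_assoc, one_mul, mul_one,
    inv_mul_cancel, coe_one, fun f g _ _ a b ha hb => coe_mul ha hb⟩
  · rw [← coe_mul (a := ⟨_, mem_G hf⟩) (b := ⟨_, mem_G hg⟩) rfl rfl]
    exact Subtype.coe_prop _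
  · let a : substitutionCoset R p n := ⟨_, mem_G hf⟩
    obtain ⟨g, hg, hga⟩ := exists_rep a⁻¹
    refine ⟨g, hg, ?_, ?_, fun g' hg' hg'f => ?_⟩
    · rw [← coe_mul (a := a) rfl hga.symm, mul_inv_cancel, coe_one]
    · rw [← coe_mul (b := a) hga.symm rfl, inv_mul_cancel, coe_one]
    · let b : substitutionCoset R p n := ⟨_, mem_G hg'⟩
      have mul_b : a * b = 1 := Subtype.ext ((coe_mul rfl rfl).trans hg'f)
      rw [hga, ← eq_inv_of_mul_eq_one_right mul_b]

/-- For an odd prime `p`, `n ≥ 1`, and a commutative ring `R` with `p·1 = 0`,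
let `G(R)` be the set of residue classes in `R[X]/(X^(p^n))` of polynomials of the form
`X + Σ_{k=1}^{n-1} a_k X^(p^k)`.  Then (i) `G(R)` is closed under the operation sending the
classes of `f, g` to the class of `g(f(X))`; (ii) each `f` has a unique two-sided inverse in
`G(R)` for this operation; consequently `G(R)` is a group under `f·g := class of g(f(X))`
with identity the class of `X`. -/
theorem stmt_1 (p n : ℕ) (hp : p.Prime) (hodd : Odd p) (hn : 1 ≤ n)
    (R : Type) [CommRing R] (hpR : (p : R) = 0)
    (P : Set (Polynomial R))
    (hP : P = {f | ∃ a : ℕ → R,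
      f = X + ∑ k ∈ Finset.Ico 1 n, C (a k) * X ^ (p ^ k)})
    (π : Polynomial R →+* Polynomial R ⧸ Ideal.span {(X : Polynomial R) ^ (p ^ n)})
    (hπ : π = Ideal.Quotient.mk (Ideal.span {(X : Polynomial R) ^ (p ^ n)}))
    (G : Set (Polynomial R ⧸ Ideal.span {(X : Polynomial R) ^ (p ^ n)}))
    (hG : G = π '' P) :
    -- (i) closure under composition
    (∀ f ∈ P, ∀ g ∈ P, π (g.comp f) ∈ G) ∧
    -- (ii) existence and uniqueness of inverses
    (∀ f ∈ P, ∃ g ∈ P, π (g.comp f) = π X ∧ π (f.comp g) = π X ∧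
      ∀ g' ∈ P, π (g'.comp f) = π X → π g' = π g) ∧
    -- consequently, G(R) is a group under `f·g := class of g(f(X))` with identity class of X
    (∃ (mul : G → G → G) (one : G) (inv : G → G),
      (∀ a b c, mul (mul a b) c = mul a (mul b c)) ∧
      (∀ a, mul one a = a) ∧ (∀ a, mul a one = a) ∧
      (∀ a, mul (inv a) a = one) ∧
      (one : Polynomial R ⧸ Ideal.span {(X : Polynomial R) ^ (p ^ n)}) = π X ∧
      (∀ (f g : Polynomial R), f ∈ P → g ∈ P → ∀ (x y : G),
        (x : Polynomial R ⧸ Ideal.span {(X : Polynomial R) ^ (p ^ n)}) = π f →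
        (y : Polynomial R ⧸ Ideal.span {(X : Polynomial R) ^ (p ^ n)}) = π g →
        ((mul x y : G) : Polynomial R ⧸ Ideal.span {(X : Polynomial R) ^ (p ^ n)}) =
          π (g.comp f))) :=
  stmt_1_general p n hp R hpR P hP π hπ G hG
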